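/- Let B be a supersoluble brace and let I be an ideal of B that is centrally nilpotent (as a brace). Then I is B-centrally nilpotent, that is, there is a finite chain {0} = I_0 ≤ I_1 ≤ … ≤ I_n = I of ideals of B such that I_{j+1}/I_j ⊆ ζ(I/I_j) for all 0 ≤ j < n. -/

import Mathlib

/-- A (skew left) brace: a set with an additive group structure (not necessarily abelian)
and a multiplicative group structure sharing the same identity, satisfying the skew
distributive law `a * (b + c) = a * b + -a + a * c`. -/
class SkewBrace (B : Type*) extends AddGroup B, Group B where
  one_eq_zero : (1 : B) = (0 : B)
  skew_distrib : ∀ a b c : B, a * (b + c) = a * b + -a + a * c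

/-- A group is supersoluble if it has a finite chain of normal subgroups with all
factors cyclic. -/
def Group.IsSupersoluble (G : Type*) [Group G] : Prop :=
  ∃ (n : ℕ) (H : ℕ → Subgroup G),
    H 0 = ⊥ ∧ H n = ⊤ ∧ (∀ i, (H i).Normal) ∧ (∀ i, i < n → H i ≤ H (i + 1)) ∧
    ∀ i, i < n → ∃ x ∈ H (i + 1), ∀ y ∈ H (i + 1), ∃ k : ℤ, (x ^ k)⁻¹ * y ∈ H i

namespace SkewBrace

variable {B : Type*} [SkewBrace B]

/-- `lam a b = -a + a * b`, i.e. `λ_a(b)`. -/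
def lam (a b : B) : B := -a + a * b

/-- the star operation `a ∗ b = λ_a(b) - b`. -/
def starOp (a b : B) : B := lam a b + -b

/-- the additive commutator `[a,b]_+`. -/
def addCommutator (a b : B) : B := -a + -b + a + b

/-- A subbrace of `B`: a subset that is a subgroup of both `(B,+)` and `(B,·)`. -/
structure Subbrace (B : Type*) [SkewBrace B] where
  carrier : Set B
  zero_mem : (0 : B) ∈ carrier
  add_mem : ∀ {a b : B}, a ∈ carrier → b ∈ carrier → a + b ∈ carrier
  neg_mem : ∀ {a : B}, a ∈ carrier → -a ∈ carrier
  mul_mem : ∀ {a b : B}, a ∈ carrier → b ∈ carrier → a * b ∈ carrier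
  inv_mem : ∀ {a : B}, a ∈ carrier → a⁻¹ ∈ carrier

/-- An ideal of `B`: a subbrace that is normal in `(B,+)` and in `(B,·)` and is
invariant under all the maps `λ_b`. -/
structure BraceIdeal (B : Type*) [SkewBrace B] extends Subbrace B where
  addConj_mem : ∀ (b : B) {a : B}, a ∈ carrier → b + a + -b ∈ carrier
  mulConj_mem : ∀ (b : B) {a : B}, a ∈ carrier → b * a * b⁻¹ ∈ carrier
  lam_mem : ∀ (b : B) {a : B}, a ∈ carrier → lam b a ∈ carrier

/-- The additive subgroup underlying a subbrace. -/
def Subbrace.addSubgroup (S : Subbrace B) : AddSubgroup B where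
  carrier := S.carrier
  zero_mem' := S.zero_mem
  add_mem' := S.add_mem
  neg_mem' := S.neg_mem

/-- The multiplicative subgroup underlying a subbrace. -/
def Subbrace.subgroup (S : Subbrace B) : Subgroup B where
  carrier := S.carrier
  one_mem' := by rw [one_eq_zero]; exact S.zero_mem
  mul_mem' := S.mul_mem
  inv_mem' := S.inv_mem

/-- Given ideals `J ≤ I` of `B`, `MemSocQuotRel I J x` says that the coset of `x`
lies in `Soc(I/J) = Ker(λ) ∩ Z(I/J, +)` (for `I = B` take `I = Set.univ`). -/
def MemSocQuotRel (I J : Set B) (x : B) : Prop :=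
  x ∈ I ∧ (∀ y ∈ I, -y + lam x y ∈ J) ∧ ∀ y ∈ I, -(y + x) + (x + y) ∈ J

/-- Given ideals `J ≤ I` of `B`, `MemZetaQuotRel I J x` says that the coset of `x`
lies in `ζ(I/J) = Soc(I/J) ∩ Z(I/J, ·)`. -/
def MemZetaQuotRel (I J : Set B) (x : B) : Prop :=
  MemSocQuotRel I J x ∧ ∀ y ∈ I, (y * x)⁻¹ * (x * y) ∈ J

/-- The coset of `x` lies in `Soc(B/J)`. -/
def MemSocQuot (J : Set B) (x : B) : Prop := MemSocQuotRel Set.univ J x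

/-- The coset of `x` lies in `ζ(B/J)`. -/
def MemZetaQuot (J : Set B) (x : B) : Prop := MemZetaQuotRel Set.univ J x

/-- For ideals `I ≤ J`, the additive group of the quotient `J/I` is infinite cyclic. -/
def QuotAddInfCyclic (I J : Set B) : Prop :=
  ∃ x ∈ J, (∀ y ∈ J, ∃ n : ℤ, -(n • x) + y ∈ I) ∧ ∀ n : ℤ, n • x ∈ I → n = 0

/-- For ideals `I ≤ J`, the quotient `J/I` has prime order `p`. -/
def QuotPrimeOrder (I J : Set B) (p : ℕ) : Prop :=
  p.Prime ∧ ∃ x ∈ J, x ∉ I ∧ p • x ∈ I ∧ ∀ y ∈ J, ∃ n : ℤ, -(n • x) + y ∈ I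

/-- A brace is supersoluble if it has a finite chain of ideals each factor of which
either is additively infinite cyclic and contained in the socle of the corresponding
quotient, or has prime order. -/
def IsSupersoluble (B : Type*) [SkewBrace B] : Prop :=
  ∃ (n : ℕ) (I : ℕ → BraceIdeal B),
    (I 0).carrier = {0} ∧ (I n).carrier = Set.univ ∧
    (∀ i, i < n → (I i).carrier ⊆ (I (i + 1)).carrier) ∧
    ∀ i, i < n →
      (QuotAddInfCyclic (I i).carrier (I (i + 1)).carrier ∧
        ∀ x ∈ (I (i + 1)).carrier, MemSocQuot (I i).carrier x) ∨
      ∃ p : ℕ, QuotPrimeOrder (I i).carrier (I (i + 1)).carrier p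

/-- The upper socle series of the brace (carrier of the ideal) `I`. -/
def socChainRel (I : Set B) : ℕ → Set B
  | 0 => {0}
  | n + 1 => {x | MemSocQuotRel I (socChainRel I n) x}

/-- The upper central series of the brace (carrier of the ideal) `I`. -/
def zetaChainRel (I : Set B) : ℕ → Set B
  | 0 => {0}
  | n + 1 => {x | MemZetaQuotRel I (zetaChainRel I n) x}

/-- The upper socle series `Soc_n(B)` of `B`. -/
def socChain (B : Type*) [SkewBrace B] : ℕ → Set B := socChainRel Set.univ

/-- The upper central series `ζ_n(B)` of `B`. -/
def zetaChain (B : Type*) [SkewBrace B] : ℕ → Set B := zetaChainRel Set.univ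

/-- A brace is centrally nilpotent if its upper central series reaches `B`. -/
def IsCentrallyNilpotent (B : Type*) [SkewBrace B] : Prop :=
  ∃ m : ℕ, zetaChain B m = Set.univ

end SkewBrace

namespace SkewBrace

/-!
Intersect a supersoluble series `K` of `B` with `I`. For `w ∈ K (j + 1) ∩ I` outside `K j`, a
minimality argument on the upper central series of `I` gives some `z ∈ K (j + 1)` outside `K j`
that is central in `I` modulo `K j`. If the factor `K (j + 1) / K j` has prime order, then `w` is a
multiple of `z` modulo `K j`, hence central as well. If it is infinite cyclic inside the socle, only
the triviality of the maps `λ_y`, `y ∈ I`, on the factor is missing; but an endomorphism of an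
infinite cyclic group fixing the nonzero class of `z` is the identity.
-/

section Cyclic

variable {A : Type*} [AddGroup A] {x z w : A}

theorem map_eq_self_of_mem_zmultiples {f : A →+ A} (hx : ¬IsOfFinAddOrder x)
    (hfx : f x ∈ AddSubgroup.zmultiples x) (hz : z ∈ AddSubgroup.zmultiples x) (hz0 : z ≠ 0)
    (hfz : f z = z) (hw : w ∈ AddSubgroup.zmultiples x) : f w = w := by
  obtain ⟨a, ha : a • x = f x⟩ := hfx
  obtain ⟨k, rfl : k • x = z⟩ := hz
  obtain ⟨c, rfl : c • x = w⟩ := hw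
  have hk : k ≠ 0 := by
    rintro rfl
    exact hz0 (zero_zsmul x)
  have hka : k * a = k := by
    apply injective_zsmul_iff_not_isOfFinAddOrder.2 hx
    change (k * a) • x = k • x
    rw [mul_zsmul, ha, ← map_zsmul, hfz]
  rw [map_zsmul, ← ha, (mul_eq_left₀ hk).1 hka, one_zsmul]

theorem mem_zmultiples_of_prime_addOrderOf (hx : (addOrderOf x).Prime)
    (hz : z ∈ AddSubgroup.zmultiples x) (hz0 : z ≠ 0) (hw : w ∈ AddSubgroup.zmultiples x) :
    w ∈ AddSubgroup.zmultiples z := by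
  have := Fact.mk hx
  obtain ⟨c, hc⟩ := mem_zmultiples_of_prime_card (Nat.card_zmultiples x)
    (g := ⟨z, hz⟩) (g' := ⟨w, hw⟩) (by simpa using hz0)
  exact ⟨c, congrArg Subtype.val hc⟩

end Cyclic

section Lam

variable {B : Type*} [SkewBrace B]

theorem mul_eq_add_lam (a b : B) : a * b = a + lam a b :=
  (add_neg_cancel_left a (a * b)).symm

theorem lam_add (a b c : B) : lam a (b + c) = lam a b + lam a c := by
  simp only [lam, skew_distrib, add_assoc]

theorem lam_one (b : B) : lam 1 b = b := by
  simp [lam, one_eq_zero]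

/-- `λ_a` as an endomorphism of `(B, +)`. -/
def lamEnd (a : B) : AddMonoid.End B :=
  AddMonoidHom.mk' (lam a) (lam_add a)

theorem lam_neg (a b : B) : lam a (-b) = -lam a b :=
  map_neg (lamEnd a) b

theorem lam_mul (a b c : B) : lam (a * b) c = lam a (lam b c) := by
  have h : lam a (lam b c) = -lam a b + lam a (b * c) := by
    rw [← lam_neg, ← lam_add, lam.eq_def b c]
  rw [h]
  simp only [lam, neg_add_rev, neg_neg, mul_assoc, add_assoc, add_neg_cancel_left]

end Lam

namespace BraceIdeal

variable {B : Type*} [SkewBrace B]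

instance normal_addSubgroup (J : BraceIdeal B) : J.addSubgroup.Normal where
  conj_mem _ ha b := J.addConj_mem b ha

instance : Min (BraceIdeal B) where
  min I J :=
    { carrier := I.carrier ∩ J.carrier
      zero_mem := ⟨I.zero_mem, J.zero_mem⟩
      add_mem := fun ha hb => ⟨I.add_mem ha.1 hb.1, J.add_mem ha.2 hb.2⟩
      neg_mem := fun ha => ⟨I.neg_mem ha.1, J.neg_mem ha.2⟩
      mul_mem := fun ha hb => ⟨I.mul_mem ha.1 hb.1, J.mul_mem ha.2 hb.2⟩
      inv_mem := fun ha => ⟨I.inv_mem ha.1, J.inv_mem ha.2⟩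
      addConj_mem := fun b _ ha => ⟨I.addConj_mem b ha.1, J.addConj_mem b ha.2⟩
      mulConj_mem := fun b _ ha => ⟨I.mulConj_mem b ha.1, J.mulConj_mem b ha.2⟩
      lam_mem := fun b _ ha => ⟨I.lam_mem b ha.1, J.lam_mem b ha.2⟩ }

theorem carrier_inf (I J : BraceIdeal B) : (I ⊓ J).carrier = I.carrier ∩ J.carrier :=
  rfl

/-- The projection of `(B, +)` onto the additive group of the quotient brace `B/J`. -/
def mkQ (J : BraceIdeal B) : B →+ B ⧸ J.addSubgroup :=
  QuotientAddGroup.mk' J.addSubgroup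

/-- The action of `(B, ·)` on the additive group of `B/J` induced by `λ`. -/
def lamQ (J : BraceIdeal B) : B →* AddMonoid.End (B ⧸ J.addSubgroup) where
  toFun a := QuotientAddGroup.map _ _ (lamEnd a) fun _ hb => J.lam_mem a hb
  map_one' := QuotientAddGroup.addMonoidHom_ext _ <|
    AddMonoidHom.ext fun b => congrArg J.mkQ (lam_one b)
  map_mul' a b := QuotientAddGroup.addMonoidHom_ext _ <|
    AddMonoidHom.ext fun c => congrArg J.mkQ (lam_mul a b c)

variable (J : BraceIdeal B) {a b : B}

theorem mkQ_eq_iff : J.mkQ a = J.mkQ b ↔ -a + b ∈ J.carrier :=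
  QuotientAddGroup.eq

theorem mkQ_eq_zero_iff : J.mkQ a = 0 ↔ a ∈ J.carrier :=
  QuotientAddGroup.eq_zero_iff a

theorem lamQ_mkQ (a b : B) : J.lamQ a (J.mkQ b) = J.mkQ (lam a b) :=
  rfl

theorem mkQ_mul (a b : B) : J.mkQ (a * b) = J.mkQ a + J.lamQ a (J.mkQ b) := by
  rw [mul_eq_add_lam, map_add, lamQ_mkQ]

theorem lamQ_mul_apply (a b : B) (ξ : B ⧸ J.addSubgroup) :
    J.lamQ (a * b) ξ = J.lamQ a (J.lamQ b ξ) := by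
  rw [map_mul]
  rfl

theorem lamQ_inv_eq_self {ξ : B ⧸ J.addSubgroup} (h : J.lamQ a ξ = ξ) : J.lamQ a⁻¹ ξ = ξ := by
  nth_rw 1 [← h]
  rw [← lamQ_mul_apply, inv_mul_cancel, map_one, AddMonoid.End.one_apply]

theorem inv_mul_mem_iff : a⁻¹ * b ∈ J.carrier ↔ -a + b ∈ J.carrier := by
  have hlam : lam a (a⁻¹ * b) = -a + b := by rw [lam, mul_inv_cancel_left]
  refine ⟨fun h => hlam ▸ J.lam_mem a h, fun h => ?_⟩
  have hmem := J.lam_mem a⁻¹ h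
  rwa [← hlam, ← lam_mul, inv_mul_cancel, lam_one] at hmem

theorem lamQ_eq_one_of_mem (ha : a ∈ J.carrier) : J.lamQ a = 1 := by
  refine QuotientAddGroup.addMonoidHom_ext _ (AddMonoidHom.ext fun b => ?_)
  change J.lamQ a (J.mkQ b) = J.mkQ b
  have hconj : J.mkQ (b⁻¹ * a * b) = 0 :=
    J.mkQ_eq_zero_iff.2 <| by simpa using J.mulConj_mem b⁻¹ ha
  calc J.lamQ a (J.mkQ b) = J.mkQ (a * b) := by
        rw [mkQ_mul, J.mkQ_eq_zero_iff.2 ha, zero_add]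
    _ = J.mkQ (b * (b⁻¹ * a * b)) := by group
    _ = J.mkQ b := by rw [mkQ_mul, hconj, map_zero, add_zero]

theorem lamQ_eq_of_mkQ_eq (h : J.mkQ a = J.mkQ b) : J.lamQ a = J.lamQ b := by
  have hmem : a⁻¹ * b ∈ J.carrier := J.inv_mul_mem_iff.2 (J.mkQ_eq_iff.1 h)
  rw [← mul_inv_cancel_left a b, map_mul, J.lamQ_eq_one_of_mem hmem, mul_one]

end BraceIdeal

section Zeta

variable {B : Type*} [SkewBrace B] {x : B}

theorem MemZetaQuotRel.mono {I J K : Set B} (hJK : J ⊆ K) (hx : MemZetaQuotRel I J x) :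
    MemZetaQuotRel I K x :=
  ⟨⟨hx.1.1, fun y hy => hJK (hx.1.2.1 y hy), fun y hy => hJK (hx.1.2.2 y hy)⟩,
    fun y hy => hJK (hx.2 y hy)⟩

theorem MemZetaQuotRel.inter {I J K : Set B} (hJ : MemZetaQuotRel I J x)
    (hK : MemZetaQuotRel I K x) : MemZetaQuotRel I (J ∩ K) x :=
  ⟨⟨hJ.1.1, fun y hy => ⟨hJ.1.2.1 y hy, hK.1.2.1 y hy⟩,
    fun y hy => ⟨hJ.1.2.2 y hy, hK.1.2.2 y hy⟩⟩, fun y hy => ⟨hJ.2 y hy, hK.2 y hy⟩⟩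

theorem memSocQuotRel_iff {I : Set B} {J : BraceIdeal B} :
    MemSocQuotRel I J.carrier x ↔ x ∈ I ∧ ∀ y ∈ I,
      J.lamQ x (J.mkQ y) = J.mkQ y ∧ AddCommute (J.mkQ x) (J.mkQ y) := by
  simp only [MemSocQuotRel, ← J.mkQ_eq_iff, AddCommute, AddSemiconjBy, J.lamQ_mkQ, map_add,
    forall₂_and, eq_comm]

theorem memZetaQuotRel_iff {I : Set B} {J : BraceIdeal B} :
    MemZetaQuotRel I J.carrier x ↔
      MemSocQuotRel I J.carrier x ∧ ∀ y ∈ I, J.lamQ y (J.mkQ x) = J.mkQ x := by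
  refine and_congr_right fun hx => forall₂_congr fun y hy => ?_
  obtain ⟨hlam, hcomm⟩ := (memSocQuotRel_iff.1 hx).2 y hy
  rw [J.inv_mul_mem_iff, ← J.mkQ_eq_iff, J.mkQ_mul, J.mkQ_mul, hlam, hcomm.eq, add_right_inj]

theorem MemZetaQuotRel.congr {I : Set B} {J : BraceIdeal B} {x' : B}
    (hx : MemZetaQuotRel I J.carrier x) (hx' : x' ∈ I) (h : J.mkQ x = J.mkQ x') :
    MemZetaQuotRel I J.carrier x' := by
  simp only [memZetaQuotRel_iff, memSocQuotRel_iff] at hx ⊢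
  rw [← h, ← J.lamQ_eq_of_mkQ_eq h]
  exact ⟨⟨hx', hx.1.2⟩, hx.2⟩

theorem memZetaQuotRel_of_mem {I : Set B} {J : BraceIdeal B} (hxI : x ∈ I)
    (hxJ : x ∈ J.carrier) : MemZetaQuotRel I J.carrier x := by
  simp only [memZetaQuotRel_iff, memSocQuotRel_iff]
  rw [J.mkQ_eq_zero_iff.2 hxJ, J.lamQ_eq_one_of_mem hxJ]
  exact ⟨⟨hxI, fun y _ => ⟨rfl, AddCommute.zero_left _⟩⟩, fun y _ => map_zero _⟩

theorem MemZetaQuotRel.add {I : Subbrace B} {J : BraceIdeal B} {x' : B}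
    (hx : MemZetaQuotRel I.carrier J.carrier x) (hx' : MemZetaQuotRel I.carrier J.carrier x') :
    MemZetaQuotRel I.carrier J.carrier (x + x') := by
  simp only [memZetaQuotRel_iff, memSocQuotRel_iff] at hx hx' ⊢
  obtain ⟨⟨hxI, hsoc⟩, hfix⟩ := hx
  obtain ⟨⟨hxI', hsoc'⟩, hfix'⟩ := hx'
  have hmul : J.mkQ (x + x') = J.mkQ (x * x') := by rw [J.mkQ_mul, hfix' x hxI, map_add]
  refine ⟨⟨I.add_mem hxI hxI', fun y hy => ⟨?_, ?_⟩⟩, fun y hy => ?_⟩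
  · rw [J.lamQ_eq_of_mkQ_eq hmul, J.lamQ_mul_apply, (hsoc' y hy).1, (hsoc y hy).1]
  · rw [map_add]
    exact (hsoc y hy).2.add_left (hsoc' y hy).2
  · rw [map_add, map_add, hfix y hy, hfix' y hy]

theorem MemZetaQuotRel.neg {I : Subbrace B} {J : BraceIdeal B}
    (hx : MemZetaQuotRel I.carrier J.carrier x) : MemZetaQuotRel I.carrier J.carrier (-x) := by
  simp only [memZetaQuotRel_iff, memSocQuotRel_iff] at hx ⊢
  obtain ⟨⟨hxI, hsoc⟩, hfix⟩ := hx
  have hlam_inv : ∀ y ∈ I.carrier, J.lamQ x⁻¹ (J.mkQ y) = J.mkQ y :=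
    fun y hy => J.lamQ_inv_eq_self (hsoc y hy).1
  have hinv : J.mkQ (-x) = J.mkQ x⁻¹ := by
    have h := J.mkQ_mul x⁻¹ x
    rw [inv_mul_cancel, one_eq_zero, map_zero, hlam_inv x hxI] at h
    rw [map_neg, eq_neg_of_add_eq_zero_left h.symm]
  refine ⟨⟨I.neg_mem hxI, fun y hy => ⟨?_, ?_⟩⟩, fun y hy => ?_⟩
  · rw [J.lamQ_eq_of_mkQ_eq hinv, hlam_inv y hy]
  · rw [map_neg]
    exact (hsoc y hy).2.neg_left
  · rw [map_neg, map_neg, hfix y hy]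

/-- The preimage of `ζ(I/J)` in `I`, as a subgroup of `(B, +)`. The ideal `J` need not be contained
in `I`; in general this is the preimage of `ζ(I/(I ∩ J))`. -/
def zetaAddSubgroup (I : Subbrace B) (J : BraceIdeal B) : AddSubgroup B where
  carrier := {x | MemZetaQuotRel I.carrier J.carrier x}
  zero_mem' := memZetaQuotRel_of_mem I.zero_mem J.zero_mem
  add_mem' := MemZetaQuotRel.add
  neg_mem' := MemZetaQuotRel.neg

theorem inter_zetaChainRel_subset {I J : Set B} {N : BraceIdeal B} (hJ : 0 ∈ J)
    (h : ∀ z ∈ N.carrier, MemZetaQuotRel I J z → z ∈ J) (m : ℕ) :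
    N.carrier ∩ zetaChainRel I m ⊆ J := by
  induction m with
  | zero =>
    rintro z ⟨-, rfl : z = 0⟩
    exact hJ
  | succ m ih =>
    rintro z ⟨hzN, hz : MemZetaQuotRel I (zetaChainRel I m) z⟩
    exact h z hzN (((memZetaQuotRel_of_mem hz.1.1 hzN).inter hz).mono ih)

theorem exists_memZetaQuotRel_notMem {I J : Set B} {N : BraceIdeal B} (hJ : 0 ∈ J)
    (hI : ∃ m, zetaChainRel I m = I) {w : B} (hwI : w ∈ I) (hwN : w ∈ N.carrier) (hwJ : w ∉ J) :
    ∃ z ∈ N.carrier, MemZetaQuotRel I J z ∧ z ∉ J := by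
  obtain ⟨m, hm⟩ := hI
  by_contra! h
  exact hwJ (inter_zetaChainRel_subset hJ h m ⟨hwN, hm.symm ▸ hwI⟩)

end Zeta

section Factor

variable {B : Type*} [SkewBrace B]

theorem QuotAddInfCyclic.exists_generator {L : BraceIdeal B} {M : Set B}
    (h : QuotAddInfCyclic L.carrier M) :
    ∃ x ∈ M, ¬IsOfFinAddOrder (L.mkQ x) ∧
      ∀ y ∈ M, L.mkQ y ∈ AddSubgroup.zmultiples (L.mkQ x) := by
  obtain ⟨x, hxM, hgen, hfree⟩ := h
  refine ⟨x, hxM, fun hfin => ?_, fun y hy => ?_⟩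
  · obtain ⟨n, hn, hnx⟩ := isOfFinAddOrder_iff_zsmul_eq_zero.1 hfin
    rw [← map_zsmul, L.mkQ_eq_zero_iff] at hnx
    exact hn (hfree n hnx)
  · obtain ⟨n, hn⟩ := hgen y hy
    exact ⟨n, (map_zsmul L.mkQ n x).symm.trans (L.mkQ_eq_iff.2 hn)⟩

theorem QuotPrimeOrder.exists_generator {L : BraceIdeal B} {M : Set B} {p : ℕ}
    (h : QuotPrimeOrder L.carrier M p) :
    ∃ x, addOrderOf (L.mkQ x) = p ∧
      ∀ y ∈ M, L.mkQ y ∈ AddSubgroup.zmultiples (L.mkQ x) := by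
  obtain ⟨hp, x, -, hxL, hpx, hgen⟩ := h
  have := Fact.mk hp
  refine ⟨x, addOrderOf_eq_prime ?_ (mt L.mkQ_eq_zero_iff.1 hxL), fun y hy => ?_⟩
  · rwa [← map_nsmul, L.mkQ_eq_zero_iff]
  · obtain ⟨n, hn⟩ := hgen y hy
    exact ⟨n, (map_zsmul L.mkQ n x).symm.trans (L.mkQ_eq_iff.2 hn)⟩

theorem MemZetaQuotRel.of_quotAddInfCyclic {I : Set B} {L M : BraceIdeal B} {z w : B}
    (hLM : QuotAddInfCyclic L.carrier M.carrier) (hzM : z ∈ M.carrier) (hzL : z ∉ L.carrier)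
    (hz : MemZetaQuotRel I L.carrier z) (hwM : w ∈ M.carrier)
    (hw : MemSocQuotRel I L.carrier w) : MemZetaQuotRel I L.carrier w := by
  obtain ⟨x, hxM, hx, hgen⟩ := hLM.exists_generator
  exact memZetaQuotRel_iff.2 ⟨hw, fun y hy => map_eq_self_of_mem_zmultiples hx
    (hgen _ (M.lam_mem y hxM)) (hgen z hzM) (mt L.mkQ_eq_zero_iff.1 hzL)
    ((memZetaQuotRel_iff.1 hz).2 y hy) (hgen w hwM)⟩

theorem MemZetaQuotRel.of_quotPrimeOrder {I : Subbrace B} {L : BraceIdeal B} {M : Set B} {p : ℕ}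
    {z w : B} (hLM : QuotPrimeOrder L.carrier M p) (hzM : z ∈ M) (hzL : z ∉ L.carrier)
    (hz : MemZetaQuotRel I.carrier L.carrier z) (hwM : w ∈ M) (hwI : w ∈ I.carrier) :
    MemZetaQuotRel I.carrier L.carrier w := by
  obtain ⟨x, hx, hgen⟩ := hLM.exists_generator
  obtain ⟨c, hc⟩ := mem_zmultiples_of_prime_addOrderOf (hx ▸ hLM.1) (hgen z hzM)
    (mt L.mkQ_eq_zero_iff.1 hzL) (hgen w hwM)
  have hcz : c • z ∈ zetaAddSubgroup I L := AddSubgroup.zsmul_mem _ hz c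
  exact MemZetaQuotRel.congr hcz hwI ((map_zsmul L.mkQ c z).trans hc)

theorem memZetaQuotRel_of_supersoluble_factor {I : Subbrace B} {L M : BraceIdeal B}
    (hI : ∃ m, zetaChainRel I.carrier m = I.carrier)
    (hLM : (QuotAddInfCyclic L.carrier M.carrier ∧ ∀ x ∈ M.carrier, MemSocQuot L.carrier x) ∨
      ∃ p, QuotPrimeOrder L.carrier M.carrier p)
    {w : B} (hwM : w ∈ M.carrier) (hwI : w ∈ I.carrier) :
    MemZetaQuotRel I.carrier L.carrier w := by
  by_cases hwL : w ∈ L.carrier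
  · exact memZetaQuotRel_of_mem hwI hwL
  obtain ⟨z, hzM, hz, hzL⟩ := exists_memZetaQuotRel_notMem L.zero_mem hI hwI hwM hwL
  rcases hLM with ⟨hcyc, hsoc⟩ | ⟨p, hp⟩
  · obtain ⟨-, hlam, hcomm⟩ := hsoc w hwM
    exact .of_quotAddInfCyclic hcyc hzM hzL hz hwM
      ⟨hwI, fun y _ => hlam y (Set.mem_univ y), fun y _ => hcomm y (Set.mem_univ y)⟩
  · exact .of_quotPrimeOrder hp hzM hzL hz hwM hwI

end Factor

/-- Let `B` be a supersoluble brace and `I` an ideal of `B` that is centrally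
nilpotent as a brace (its upper central series reaches `I`). Then `I` is
`B`-centrally nilpotent: there is a finite chain `{0} = J 0 ≤ … ≤ J n = I` of
ideals of `B` whose factors are central in `I`. -/
theorem bCentrallyNilpotent_of_centrallyNilpotent (B : Type*) [SkewBrace B]
    (hB : IsSupersoluble B) (I : BraceIdeal B)
    (hcn : ∃ m : ℕ, zetaChainRel I.carrier m = I.carrier) :
    ∃ (n : ℕ) (J : ℕ → BraceIdeal B),
      (J 0).carrier = {0} ∧ (J n).carrier = I.carrier ∧
      (∀ j, j < n → (J j).carrier ⊆ (J (j + 1)).carrier) ∧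
      ∀ j, j < n → ∀ x ∈ (J (j + 1)).carrier,
        MemZetaQuotRel I.carrier (J j).carrier x := by
  obtain ⟨n, K, hK0, hKn, hmono, hfactor⟩ := hB
  refine ⟨n, fun j => K j ⊓ I, ?_, ?_, fun j hj x hx => ⟨hmono j hj hx.1, hx.2⟩, ?_⟩
  · rw [BraceIdeal.carrier_inf, hK0]
    exact Set.inter_eq_left.2 (Set.singleton_subset_iff.2 I.zero_mem)
  · rw [BraceIdeal.carrier_inf, hKn, Set.univ_inter]
  · rintro j hj x ⟨hxK, hxI⟩
    have hx : MemZetaQuotRel I.carrier (K j).carrier x :=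
      memZetaQuotRel_of_supersoluble_factor (I := I.toSubbrace) hcn (hfactor j hj) hxK hxI
    exact hx.inter (memZetaQuotRel_of_mem hxI hxI)

end SkewBrace
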